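/- Let m ≥ 7 be odd and let f₅(x) = x^{2^{m−1} − 2^{(m−1)/2} + 1}; let s_t = Tr(f₅(α^t + 1)). Then the binary cyclic code C_s has length 2^m − 1 and 𝔽₂-dimension 2^m − 1 − L_s, where L_s = 1 + m(2^{(m−1)/2} − 1) if m ≡ 1 (mod 4) and L_s = 1 + m(2^{(m−1)/2} − 3) if m ≡ 3 (mod 4), and the minimum distance satisfies 2^{(m−3)/2} ≤ d(C_s) ≤ L_s. -/

import Mathlib

open Polynomial
open scoped Classical

/-- The polynomial S(x) = ∑_{t=0}^{v−1} s_t x^t ∈ 𝔽₂[x], where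
    s_t = Tr(f(α^t + 1)) and v = 2^m − 1. -/
noncomputable def traceSeqPoly (m : ℕ) (α : GaloisField 2 m)
    (f : GaloisField 2 m → GaloisField 2 m) : Polynomial (ZMod 2) :=
  ∑ t ∈ Finset.range (2 ^ m - 1),
    C (Algebra.trace (ZMod 2) (GaloisField 2 m) (f (α ^ t + 1))) * X ^ t

/-- The minimal polynomial of the sequence:
    g_s(x) = (x^v − 1)/gcd(x^v − 1, S(x)). Its degree is the linear span L_s. -/
noncomputable def genPoly (m : ℕ) (α : GaloisField 2 m)
    (f : GaloisField 2 m → GaloisField 2 m) : Polynomial (ZMod 2) :=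
  (X ^ (2 ^ m - 1) - 1) /
    EuclideanDomain.gcd (X ^ (2 ^ m - 1) - 1) (traceSeqPoly m α f)

/-- The binary cyclic code C_s = {c ∈ 𝔽₂[x] : deg c < v and g_s ∣ c},
    as an 𝔽₂-submodule of 𝔽₂[x]. -/
noncomputable def codeC (m : ℕ) (α : GaloisField 2 m)
    (f : GaloisField 2 m → GaloisField 2 m) :
    Submodule (ZMod 2) (Polynomial (ZMod 2)) :=
  Polynomial.degreeLT (ZMod 2) (2 ^ m - 1) ⊓
    (Ideal.span {genPoly m α f}).restrictScalars (ZMod 2)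

/-- The set of Hamming weights (numbers of nonzero coefficients) of the
    nonzero codewords of a code; the minimum distance is its least element. -/
def wtSet (Cs : Submodule (ZMod 2) (Polynomial (ZMod 2))) : Set ℕ :=
  {w | ∃ c : Polynomial (ZMod 2), c ∈ Cs ∧ c ≠ 0 ∧ c.support.card = w}

/-!
Write `m = 2h + 1`, so that the exponent is `2^h (2^h - 1) + 1`. In characteristic two
`(x + 1)^(2^h - 1) = ∑_{i < 2^h} x^i`, and since the trace is invariant under squaring,
`Tr (f₅ (x + 1))` becomes the sum of `Tr (x^i)` over `i ∈ [0, 2^h) ∪ [2^(h+1), 3 * 2^h)`. Replacing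
even indices by their odd parts and cancelling in pairs leaves `1 + ∑_{j ∈ J} Tr (x^j)`, where the
odd numbers `j ∈ J` represent distinct 2-cyclotomic cosets of full size `m`. Hence
`s_t = ∑_{z ∈ Z} z^t` with `Z = {1} ∪ {α^(2^r j)}`, and by orthogonality the roots of `g_s` are
exactly the inverses of the elements of `Z`, so `L_s = |Z| = 1 + m |J|`.

The set `J` contains `2^(h-1) - 1` consecutive odd numbers, so the BCH bound gives
`2^(h-1) ≤ d(C_s)`. For the upper bound, `g_s` is itself a codeword, with at most `L_s + 1` nonzero
coefficients; their number is even because `g_s(1) = 0`, and `L_s` is even because `|J|` is odd.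
-/

section OddNumbers

/-- The odd numbers in the half-open interval `[a, b)`: what is left of a sum of `T` over an
interval once `T (2 * i) = T i` has been used on its even terms. -/
def oddIco (a b : ℕ) : Finset ℕ := {j ∈ Finset.Ico a b | Odd j}

lemma mem_oddIco {a b j : ℕ} : j ∈ oddIco a b ↔ (a ≤ j ∧ j < b) ∧ Odd j := by
  simp [oddIco]

lemma oddIco_disjoint_oddIco (a b c : ℕ) : Disjoint (oddIco a b) (oddIco b c) :=
  (Finset.Ico_disjoint_Ico_consecutive a b c).mono
    (Finset.filter_subset _ _) (Finset.filter_subset _ _)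

lemma oddIco_subset_oddIco {a b c d : ℕ} (hca : c ≤ a) (hbd : b ≤ d) :
    oddIco a b ⊆ oddIco c d :=
  Finset.filter_subset_filter _ (Finset.Ico_subset_Ico hca hbd)

lemma sum_Ico_two_mul {M : Type*} [AddCommMonoid M] (f : ℕ → M) (a b : ℕ) :
    ∑ i ∈ Finset.Ico (2 * a) (2 * b), f i =
      ∑ i ∈ Finset.Ico a b, f (2 * i) + ∑ j ∈ oddIco (2 * a) (2 * b), f j := by
  have evens : {i ∈ Finset.Ico (2 * a) (2 * b) | ¬ Odd i} = (Finset.Ico a b).image (2 * ·) := by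
    ext i
    simp only [Finset.mem_filter, Finset.mem_Ico, Nat.not_odd_iff_even, Finset.mem_image]
    constructor
    · rintro ⟨hi, k, rfl⟩
      exact ⟨k, by omega, by omega⟩
    · rintro ⟨k, hk, rfl⟩
      exact ⟨by omega, even_two_mul k⟩
  rw [← Finset.sum_filter_not_add_sum_filter _ Odd f, evens,
    Finset.sum_image fun i _ j _ hij => Nat.mul_left_cancel two_pos hij, oddIco]

lemma card_oddIco_two_mul (a b : ℕ) : (oddIco (2 * a) (2 * b)).card = b - a := by
  have h := sum_Ico_two_mul (fun _ => 1) a b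
  simp only [Finset.sum_const, Nat.card_Ico, smul_eq_mul, mul_one] at h
  omega

end OddNumbers

section TraceExponents

/-- The odd numbers in `[2 ^ (h + 1), 3 * 2 ^ h)`, which contain the run of exponents behind the
lower bound on the minimum distance. -/
def highExponents (h : ℕ) : Finset ℕ := oddIco (2 ^ (h + 1)) (3 * 2 ^ h)

/-- The odd `j < 2 ^ (h + 1)` that survive, modulo 2, when the sum of `T` over
`[0, 2 ^ h) ∪ [2 ^ (h + 1), 3 * 2 ^ h)` is reduced to odd indices by `T (2 * i) = T i`. -/
def lowExponents : ℕ → Finset ℕ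
  | 0 => {1}
  | h + 1 => (oddIco 0 (2 ^ (h + 1)) \ lowExponents h) ∪ highExponents h

/-- The exponents `j`, one for each cyclotomic coset, in the expansion
`Tr ((x + 1) ^ (2 ^ (2 * h) - 2 ^ h + 1)) = 1 + ∑ j, Tr (x ^ j)` over the field with
`2 ^ (2 * h + 1)` elements. The two erased numbers lie in the same coset and cancel. -/
def traceExponents (h : ℕ) : Finset ℕ :=
  (lowExponents h).erase (2 ^ h + 1) ∪ (highExponents h).erase (2 ^ (h + 1) + 1)

lemma lowExponents_subset_oddIco : ∀ h, lowExponents h ⊆ oddIco 0 (2 ^ (h + 1))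
  | 0 => by decide
  | h + 1 => by
    have := Nat.two_pow_pos h
    exact Finset.union_subset
      (Finset.sdiff_subset.trans (oddIco_subset_oddIco le_rfl (by omega)))
      (oddIco_subset_oddIco (Nat.zero_le _) (by omega))

lemma disjoint_sdiff_lowExponents_highExponents (h : ℕ) :
    Disjoint (oddIco 0 (2 ^ (h + 1)) \ lowExponents h) (highExponents h) :=
  (oddIco_disjoint_oddIco _ _ _).mono_left Finset.sdiff_subset

lemma disjoint_erase_lowExponents_erase_highExponents (h a b : ℕ) :
    Disjoint ((lowExponents h).erase a) ((highExponents h).erase b) :=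
  (oddIco_disjoint_oddIco _ _ _).mono
    ((Finset.erase_subset _ _).trans (lowExponents_subset_oddIco h)) (Finset.erase_subset _ _)

lemma two_pow_succ_add_one_mem_highExponents {h : ℕ} (hh : 1 ≤ h) :
    2 ^ (h + 1) + 1 ∈ highExponents h := by
  have := Nat.one_lt_two_pow (n := h) (by omega)
  exact mem_oddIco.2 ⟨by omega, ⟨2 ^ h, by ring⟩⟩

lemma two_pow_add_one_mem_lowExponents {h : ℕ} (hh : 2 ≤ h) : 2 ^ h + 1 ∈ lowExponents h := by
  obtain ⟨k, rfl⟩ : ∃ k, h = k + 1 := ⟨h - 1, by omega⟩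
  exact Finset.mem_union_right _ (two_pow_succ_add_one_mem_highExponents (by omega))

lemma card_highExponents_succ (h : ℕ) : (highExponents (h + 1)).card = 2 ^ h := by
  rw [highExponents, pow_succ', pow_succ' 2 h, mul_left_comm 3, card_oddIco_two_mul]
  omega

lemma card_lowExponents_succ : ∀ h, ((lowExponents (h + 1)).card : ℤ) = 2 ^ h - (-1) ^ h
  | 0 => by decide
  | h + 1 => by
    have hsdiff : (oddIco 0 (2 ^ (h + 2)) \ lowExponents (h + 1)).card +
        (lowExponents (h + 1)).card = 2 ^ (h + 1) := by
      rw [Finset.card_sdiff_add_card_eq_card (lowExponents_subset_oddIco (h + 1))]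
      simpa only [mul_zero, ← pow_succ', Nat.sub_zero] using card_oddIco_two_mul 0 (2 ^ (h + 1))
    rw [lowExponents, Finset.card_union_of_disjoint (disjoint_sdiff_lowExponents_highExponents _),
      card_highExponents_succ]
    zify at hsdiff ⊢
    linear_combination hsdiff - card_lowExponents_succ h

lemma card_traceExponents {h : ℕ} (hh : 2 ≤ h) :
    ((traceExponents h).card : ℤ) = 2 ^ h + (-1) ^ h - 2 := by
  have hlow := Finset.card_erase_add_one (two_pow_add_one_mem_lowExponents hh)
  have hhigh := Finset.card_erase_add_one (two_pow_succ_add_one_mem_highExponents (h := h)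
    (by omega))
  obtain ⟨k, rfl⟩ : ∃ k, h = k + 1 := ⟨h - 1, by omega⟩
  rw [card_highExponents_succ] at hhigh
  rw [traceExponents,
    Finset.card_union_of_disjoint (disjoint_erase_lowExponents_erase_highExponents ..)]
  zify at hlow hhigh ⊢
  linear_combination hlow + hhigh + card_lowExponents_succ k

lemma card_traceExponents_of_even {h : ℕ} (hh : 2 ≤ h) (heven : Even h) :
    (traceExponents h).card = 2 ^ h - 1 := by
  have hcard := card_traceExponents hh
  rw [heven.neg_one_pow] at hcard
  zify [Nat.one_le_two_pow (n := h)]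
  linear_combination hcard

lemma card_traceExponents_of_odd {h : ℕ} (hh : 2 ≤ h) (hodd : Odd h) :
    (traceExponents h).card = 2 ^ h - 3 := by
  have hcard := card_traceExponents hh
  rw [hodd.neg_one_pow] at hcard
  have hpow : 3 ≤ 2 ^ h := (Nat.le_succ 3).trans (Nat.pow_le_pow_right two_pos hh)
  zify [hpow]
  linear_combination hcard

lemma odd_card_traceExponents {h : ℕ} (hh : 2 ≤ h) : Odd (traceExponents h).card := by
  rw [← Int.odd_coe_nat, card_traceExponents hh]
  have hpow : Even ((2 : ℤ) ^ h) := (Int.even_pow' (by omega)).2 even_two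
  exact (hpow.add_odd (odd_neg_one.pow)).sub_even even_two

lemma two_pow_add_mem_traceExponents {h i : ℕ} (hh : 1 ≤ h) (hi : i < 2 ^ (h - 1) - 1) :
    2 ^ (h + 1) + 3 + 2 * i ∈ traceExponents h := by
  obtain ⟨k, rfl⟩ := Nat.exists_eq_add_of_le' hh
  rw [Nat.add_sub_cancel] at hi
  refine Finset.mem_union_right _ (Finset.mem_erase.2 ⟨by omega, mem_oddIco.2 ⟨by omega, ?_⟩⟩)
  exact ⟨2 ^ (k + 1) + 1 + i, by ring⟩

lemma one_add_mul_card_traceExponents_lt {h : ℕ} (hh : 2 ≤ h) :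
    1 + (2 * h + 1) * (traceExponents h).card < 2 ^ (2 * h + 1) - 1 := by
  have hcard : (traceExponents h).card < 2 ^ h := by
    zify
    rw [card_traceExponents hh]
    rcases neg_one_pow_eq_or ℤ h with hsign | hsign <;> rw [hsign] <;> omega
  have hsq : 2 ^ (2 * h + 1) = 2 * (2 ^ h * 2 ^ h) := by ring
  have hlin : 2 * h + 1 < 2 * 2 ^ h := by have := h.lt_two_pow_self; omega
  have hmul : (2 * h + 1) * ((traceExponents h).card + 1) ≤ 2 * 2 ^ h * 2 ^ h :=
    Nat.mul_le_mul hlin.le hcard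
  rw [mul_add, mul_assoc] at hmul
  omega

section Sums

variable {R : Type*} [CommRing R] [CharP R 2] {T : ℕ → R} (hT : ∀ i, T (2 * i) = T i)
include hT

lemma sum_range_add_sum_Ico_eq_sum_lowExponents (h : ℕ) :
    ∑ i ∈ Finset.range (2 ^ h), T i + ∑ i ∈ Finset.Ico (2 ^ (h + 1)) (3 * 2 ^ h), T i =
      T 0 + (∑ j ∈ lowExponents h, T j + ∑ j ∈ highExponents h, T j) := by
  induction h with
  | zero => simp [lowExponents, highExponents, oddIco, Finset.sum_filter, ← hT 1]
  | succ h ih =>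
    have hsplit (a b : ℕ) : ∑ i ∈ Finset.Ico (2 * a) (2 * b), T i =
        ∑ i ∈ Finset.Ico a b, T i + ∑ j ∈ oddIco (2 * a) (2 * b), T j := by
      simpa only [hT] using sum_Ico_two_mul T a b
    have hlow := hsplit 0 (2 ^ h)
    have hhigh := hsplit (2 ^ (h + 1)) (3 * 2 ^ h)
    rw [mul_zero, ← Finset.range_eq_Ico, ← Finset.range_eq_Ico, ← pow_succ'] at hlow
    rw [mul_left_comm, ← pow_succ', ← pow_succ', ← highExponents] at hhigh
    have hsdiff := Finset.sum_sdiff (f := T) (lowExponents_subset_oddIco h)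
    rw [hlow, hhigh, lowExponents,
      Finset.sum_union (disjoint_sdiff_lowExponents_highExponents h)]
    linear_combination ih - hsdiff + CharTwo.add_self_eq_zero (∑ j ∈ lowExponents h, T j)

lemma sum_range_add_sum_Ico_eq_sum_traceExponents {h : ℕ} (hh : 2 ≤ h)
    (hcoset : T (2 ^ (h + 1) + 1) = T (2 ^ h + 1)) :
    ∑ i ∈ Finset.range (2 ^ h), T i + ∑ i ∈ Finset.Ico (2 ^ (h + 1)) (3 * 2 ^ h), T i =
      T 0 + ∑ j ∈ traceExponents h, T j := by
  rw [sum_range_add_sum_Ico_eq_sum_lowExponents hT, traceExponents,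
    Finset.sum_union (disjoint_erase_lowExponents_erase_highExponents ..),
    ← Finset.add_sum_erase _ T (two_pow_add_one_mem_lowExponents hh),
    ← Finset.add_sum_erase _ T (two_pow_succ_add_one_mem_highExponents (h := h) (by omega)), hcoset]
  linear_combination CharTwo.add_self_eq_zero (T (2 ^ h + 1))

end Sums

end TraceExponents

section CyclotomicCosets

/-- The odd numbers below `3 * 2 ^ h` other than `2 ^ (h + 1) + 1`; they lie in distinct
2-cyclotomic cosets modulo `2 ^ (2 * h + 1) - 1`, each of full size `2 * h + 1`. -/
def cosetReps (h : ℕ) : Finset ℕ := (oddIco 0 (3 * 2 ^ h)).erase (2 ^ (h + 1) + 1)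

lemma mem_cosetReps {h j : ℕ} :
    j ∈ cosetReps h ↔ j ≠ 2 ^ (h + 1) + 1 ∧ j < 3 * 2 ^ h ∧ Odd j := by
  simp [cosetReps, mem_oddIco]

lemma traceExponents_subset_cosetReps (h : ℕ) : traceExponents h ⊆ cosetReps h := by
  intro j hj
  rcases Finset.mem_union.1 hj with hlow | hhigh
  · have hlt := mem_oddIco.1 (lowExponents_subset_oddIco h (Finset.mem_of_mem_erase hlow))
    exact mem_cosetReps.2 ⟨by omega, by omega, hlt.2⟩
  · obtain ⟨hne, hmem⟩ := Finset.mem_erase.1 hhigh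
    have hlt := mem_oddIco.1 hmem
    exact mem_cosetReps.2 ⟨hne, by omega, hlt.2⟩

lemma three_mul_two_pow_lt {h : ℕ} (hh : 1 ≤ h) : 3 * 2 ^ h < 2 ^ (2 * h + 1) - 1 := by
  have hsq : 2 ^ (2 * h + 1) = 2 * (2 ^ h * 2 ^ h) := by ring
  have htwo : 2 ≤ 2 ^ h := Nat.le_self_pow (by omega) 2
  have hle : 2 * 2 ^ h ≤ 2 ^ h * 2 ^ h := Nat.mul_le_mul_right _ htwo
  omega

lemma coprime_two_pow_sub_one_two {m : ℕ} (hm : m ≠ 0) : (2 ^ m - 1).Coprime 2 := by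
  rw [Nat.coprime_two_right]
  exact Nat.Even.sub_odd Nat.one_le_two_pow ((Nat.even_pow' hm).2 even_two) odd_one

lemma two_pow_modEq_one (m : ℕ) : 2 ^ m ≡ 1 [MOD 2 ^ m - 1] :=
  Nat.modEq_sub Nat.one_le_two_pow

lemma not_two_pow_mul_modEq_of_lt {h s j j' : ℕ} (hs : 0 < s) (hj' : j' ∈ cosetReps h)
    (hlt : 2 ^ s * j < 2 ^ (2 * h + 1) - 1) (hlt' : j' < 2 ^ (2 * h + 1) - 1) :
    ¬ 2 ^ s * j ≡ j' [MOD 2 ^ (2 * h + 1) - 1] := by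
  intro hmod
  have hodd : Odd j' := (mem_cosetReps.1 hj').2.2
  rw [← hmod.eq_of_lt_of_lt hlt hlt', ← Nat.not_even_iff_odd] at hodd
  exact hodd (((Nat.even_pow' hs.ne').2 even_two).mul_right j)

lemma two_pow_mul_lt_of_lt {h s j : ℕ} (hs : s < h) (hj : j < 3 * 2 ^ h) :
    2 ^ s * j < 2 ^ (2 * h + 1) - 1 := by
  have hpow : 2 ^ (s + 1) ≤ 2 ^ h := Nat.pow_le_pow_right two_pos hs
  have hle : 2 ^ (s + 1) * (j + 1) ≤ 2 ^ h * (3 * 2 ^ h) := Nat.mul_le_mul hpow hj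
  have : 0 < 2 ^ s := Nat.two_pow_pos s
  have : 0 < 2 ^ h * 2 ^ h := by positivity
  have hsq : 2 ^ (2 * h + 1) = 2 * (2 ^ h * 2 ^ h) := by ring
  have : 2 ^ (s + 1) * (j + 1) = 2 * (2 ^ s * j) + 2 * 2 ^ s := by ring
  have : 2 ^ h * (3 * 2 ^ h) = 3 * (2 ^ h * 2 ^ h) := by ring
  omega

lemma not_two_pow_self_mul_modEq {h j j' : ℕ} (hj : j ∈ cosetReps h) (hj' : j' ∈ cosetReps h)
    (hlt' : j' < 2 ^ (2 * h + 1) - 1) (hge : 2 ^ (h + 1) ≤ j) :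
    ¬ 2 ^ h * j ≡ j' [MOD 2 ^ (2 * h + 1) - 1] := by
  intro hmod
  obtain ⟨hne, hlt, hodd⟩ := mem_cosetReps.1 hj
  obtain ⟨i, rfl⟩ := Nat.exists_eq_add_of_le hge
  have hi : 3 ≤ i := by
    obtain ⟨k, hk⟩ := hodd
    omega
  -- Multiplication by `2 ^ h` carries the leading bit of `j` around to the unit bit.
  have hwrap : 1 + 2 ^ h * i ≡ j' [MOD 2 ^ (2 * h + 1) - 1] := by
    refine Nat.ModEq.trans (Nat.ModEq.symm ?_) hmod
    rw [show 2 ^ h * (2 ^ (h + 1) + i) = 2 ^ (2 * h + 1) + 2 ^ h * i by ring]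
    exact (two_pow_modEq_one _).add_right _
  have hsq : 2 ^ (2 * h + 1) = 2 * (2 ^ h * 2 ^ h) := by ring
  have hupper : 2 ^ h * (i + 1) ≤ 2 ^ h * 2 ^ h := Nat.mul_le_mul_left _ (by omega)
  have hlower : 2 ^ h * 3 ≤ 2 ^ h * i := Nat.mul_le_mul_left _ hi
  have heq : 1 + 2 ^ h * i = j' := by
    refine hwrap.eq_of_lt_of_lt ?_ hlt'
    rw [mul_add] at hupper
    omega
  have := (mem_cosetReps.1 hj').2.1
  omega

lemma not_two_pow_mul_modEq_of_le {h s j j' : ℕ} (hs : 0 < s) (hsh : s ≤ h)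
    (hj : j ∈ cosetReps h) (hj' : j' ∈ cosetReps h) :
    ¬ 2 ^ s * j ≡ j' [MOD 2 ^ (2 * h + 1) - 1] := by
  have hlt' : j' < 2 ^ (2 * h + 1) - 1 :=
    (mem_cosetReps.1 hj').2.1.trans (three_mul_two_pow_lt (by omega))
  rcases hsh.lt_or_eq with hsh | rfl
  · exact not_two_pow_mul_modEq_of_lt hs hj'
      (two_pow_mul_lt_of_lt hsh (mem_cosetReps.1 hj).2.1) hlt'
  · rcases lt_or_ge j (2 ^ (s + 1)) with hlt | hge
    · refine not_two_pow_mul_modEq_of_lt hs hj' ?_ hlt'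
      have hle : 2 ^ s * (j + 1) ≤ 2 ^ s * 2 ^ (s + 1) := Nat.mul_le_mul_left _ hlt
      have htwo : 2 ≤ 2 ^ s := Nat.le_self_pow hs.ne' 2
      rw [← pow_add, show s + (s + 1) = 2 * s + 1 by ring, mul_add] at hle
      omega
    · exact not_two_pow_self_mul_modEq hj hj' hlt' hge

lemma not_two_pow_mul_modEq {h s j j' : ℕ} (hs : 0 < s) (hsh : s < 2 * h + 1)
    (hj : j ∈ cosetReps h) (hj' : j' ∈ cosetReps h) :
    ¬ 2 ^ s * j ≡ j' [MOD 2 ^ (2 * h + 1) - 1] := by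
  rcases le_or_gt s h with hle | hlt
  · exact not_two_pow_mul_modEq_of_le hs hle hj hj'
  · intro hmod
    refine not_two_pow_mul_modEq_of_le (s := 2 * h + 1 - s) (by omega) (by omega) hj' hj ?_
    calc 2 ^ (2 * h + 1 - s) * j'
        ≡ 2 ^ (2 * h + 1 - s) * (2 ^ s * j) [MOD 2 ^ (2 * h + 1) - 1] := hmod.symm.mul_left _
      _ = 2 ^ (2 * h + 1) * j := by rw [← mul_assoc, ← pow_add, Nat.sub_add_cancel hsh.le]
      _ ≡ 1 * j [MOD 2 ^ (2 * h + 1) - 1] := (two_pow_modEq_one _).mul_right j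
      _ = j := one_mul j

lemma eq_and_eq_of_two_pow_mul_modEq {h r r' j j' : ℕ} (hh : 1 ≤ h) (hr : r < 2 * h + 1)
    (hr' : r' < 2 * h + 1) (hj : j ∈ cosetReps h) (hj' : j' ∈ cosetReps h)
    (hmod : 2 ^ r * j ≡ 2 ^ r' * j' [MOD 2 ^ (2 * h + 1) - 1]) : r = r' ∧ j = j' := by
  wlog hle : r' ≤ r generalizing r r' j j'
  · exact (this hr' hr hj' hj hmod.symm (by omega)).imp Eq.symm Eq.symm
  obtain ⟨s, rfl⟩ := Nat.exists_eq_add_of_le hle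
  rw [pow_add 2 r' s, mul_assoc] at hmod
  have hcancel : 2 ^ s * j ≡ j' [MOD 2 ^ (2 * h + 1) - 1] :=
    hmod.cancel_left_of_coprime ((coprime_two_pow_sub_one_two (by omega)).pow_right r')
  have hs : s = 0 := by
    by_contra hs
    exact not_two_pow_mul_modEq (by omega) (by omega) hj hj' hcancel
  have hlt {i : ℕ} (hi : i ∈ cosetReps h) : i < 2 ^ (2 * h + 1) - 1 :=
    (mem_cosetReps.1 hi).2.1.trans (three_mul_two_pow_lt hh)
  subst hs
  rw [pow_zero, one_mul] at hcancel
  exact ⟨rfl, hcancel.eq_of_lt_of_lt (hlt hj) (hlt hj')⟩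

end CyclotomicCosets

section CyclicCodes

lemma lt_card_support_of_aeval_eq_zero {R A : Type*} [CommRing R] [CommRing A] [IsDomain A]
    [Algebra R A] [FaithfulSMul R A] {c : R[X]} (hc : c ≠ 0) {n w : ℕ} {β δ : A} (hβ : β ≠ 0)
    (hδ : IsPrimitiveRoot δ n) (hdeg : c.degree < n)
    (hroots : ∀ i < w, aeval (β * δ ^ i) c = 0) : w < c.support.card := by
  by_contra! hle
  let e := c.support.equivFin.symm
  have hlt (i : Fin c.support.card) : (e i : ℕ) < n := by
    exact_mod_cast (le_degree_of_mem_supp _ (e i).2).trans_lt hdeg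
  have hinj : Function.Injective fun i => δ ^ (e i : ℕ) := fun i j hij =>
    e.injective (Subtype.ext (hδ.pow_inj (hlt i) (hlt j) hij))
  have hvandermonde : (fun i => algebraMap R A (c.coeff (e i)) * β ^ (e i : ℕ)) = 0 := by
    refine Matrix.eq_zero_of_forall_pow_sum_mul_pow_eq_zero hinj fun i => ?_
    rw [e.sum_comp fun a : c.support => algebraMap R A (c.coeff a) * β ^ (a : ℕ) *
      (δ ^ (a : ℕ)) ^ (i : ℕ), Finset.sum_coe_sort c.support fun a =>
      algebraMap R A (c.coeff a) * β ^ a * (δ ^ a) ^ (i : ℕ),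
      ← hroots i (i.2.trans_le hle), aeval_def, eval₂_eq_sum, Polynomial.sum]
    refine Finset.sum_congr rfl fun a _ => ?_
    rw [mul_pow, pow_right_comm, mul_assoc]
  obtain ⟨a, ha⟩ := Polynomial.nonempty_support_iff.2 hc
  have hzero := congrFun hvandermonde (e.symm ⟨a, ha⟩)
  simp only [Equiv.apply_symm_apply, Pi.zero_apply, mul_eq_zero, pow_ne_zero a hβ, or_false,
    FaithfulSMul.algebraMap_eq_zero_iff] at hzero
  exact mem_support_iff.1 ha hzero

section Dimension

variable {F : Type*} [Field F] {g : F[X]}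

lemma degreeLT_inf_span_singleton_eq_map (hg : g ≠ 0) (n : ℕ) :
    degreeLT F n ⊓ (Ideal.span {g}).restrictScalars F =
      (degreeLT F (n - g.natDegree)).map (LinearMap.mulLeft F g) := by
  have hdegree (q : F[X]) : g * q ∈ degreeLT F n ↔ q ∈ degreeLT F (n - g.natDegree) := by
    rcases eq_or_ne q 0 with rfl | hq
    · simp
    · rw [mem_degreeLT, mem_degreeLT, ← natDegree_lt_iff_degree_lt (mul_ne_zero hg hq),
        ← natDegree_lt_iff_degree_lt hq, natDegree_mul hg hq, Nat.lt_sub_iff_add_lt']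
  ext c
  simp only [Submodule.mem_inf, Submodule.restrictScalars_mem, Ideal.mem_span_singleton,
    Submodule.mem_map, LinearMap.mulLeft_apply]
  constructor
  · rintro ⟨hc, q, rfl⟩
    exact ⟨q, (hdegree q).1 hc, rfl⟩
  · rintro ⟨q, hq, rfl⟩
    exact ⟨(hdegree q).2 hq, dvd_mul_right g q⟩

lemma finrank_degreeLT_inf_span_singleton (hg : g ≠ 0) (n : ℕ) :
    Module.finrank F ↥(degreeLT F n ⊓ (Ideal.span {g}).restrictScalars F) =
      n - g.natDegree := by
  rw [degreeLT_inf_span_singleton_eq_map hg,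
    ← (Submodule.equivMapOfInjective _ (mul_right_injective₀ hg) _).finrank_eq,
    (degreeLTEquiv F _).finrank_eq, Module.finrank_fin_fun]

end Dimension

section GcdQuotient

variable {F K : Type*} [Field F] [Field K] [Algebra F K] [DecidableEq F[X]] {P : F[X]}

lemma div_gcd_dvd (P S : F[X]) : P / EuclideanDomain.gcd P S ∣ P :=
  EuclideanDomain.div_dvd_of_dvd (EuclideanDomain.gcd_dvd_left P S)

lemma aeval_div_gcd_eq_zero_iff (hP : P.Separable) (S : F[X]) (x : K) :
    aeval x (P / EuclideanDomain.gcd P S) = 0 ↔ aeval x P = 0 ∧ aeval x S ≠ 0 := by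
  set d := EuclideanDomain.gcd P S with hd
  have hdP : d * (P / d) = P :=
    EuclideanDomain.mul_div_cancel' (fun h => hP.ne_zero (EuclideanDomain.gcd_eq_zero_iff.1 h).1)
      (EuclideanDomain.gcd_dvd_left P S)
  have hcoprime : IsCoprime d (P / d) := by
    rw [← hdP] at hP
    exact hP.isCoprime
  constructor
  · intro hx
    have hPx : aeval x P = 0 := aeval_eq_zero_of_dvd_aeval_eq_zero (div_gcd_dvd P S) hx
    refine ⟨hPx, fun hSx => ?_⟩
    have hdx : aeval x d = 0 := by
      rw [hd, EuclideanDomain.gcd_eq_gcd_ab, map_add, map_mul, map_mul, hPx, hSx, zero_mul,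
        zero_mul, add_zero]
    exact (hcoprime.map (aeval x : F[X] →ₐ[F] K).toRingHom).ne_zero_or_ne_zero.elim (· hdx) (· hx)
  · rintro ⟨hPx, hSx⟩
    rw [← hdP, map_mul, mul_eq_zero] at hPx
    exact hPx.resolve_left fun hdx =>
      hSx (aeval_eq_zero_of_dvd_aeval_eq_zero (EuclideanDomain.gcd_dvd_right P S) hdx)

end GcdQuotient

lemma geom_sum_eq_ite_of_pow_eq_one {K : Type*} [CommRing K] [IsDomain K] [DecidableEq K] {n : ℕ}
    {y : K} (hy : y ^ n = 1) : ∑ t ∈ Finset.range n, y ^ t = if y = 1 then (n : K) else 0 := by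
  split_ifs with h
  · simp [h]
  · have hmul := geom_sum_mul y n
    rw [hy, sub_self] at hmul
    exact (mul_eq_zero.1 hmul).resolve_right (sub_ne_zero.2 h)

lemma even_card_support_of_eval_one_eq_zero {g : (ZMod 2)[X]} (hg : g.eval 1 = 0) :
    Even g.support.card := by
  rw [← ZMod.natCast_eq_zero_iff_even, ← hg, eval_eq_sum, Polynomial.sum,
    Finset.cast_card]
  refine Finset.sum_congr rfl fun a ha => ?_
  rw [one_pow, mul_one]
  exact (Fin.eq_one_of_ne_zero _ (mem_support_iff.1 ha)).symm

lemma card_support_le_natDegree_of_eval_one_eq_zero {g : (ZMod 2)[X]} (hg : g.eval 1 = 0)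
    (heven : Even g.natDegree) : g.support.card ≤ g.natDegree := by
  have hle := card_supp_le_succ_natDegree g
  obtain ⟨k, hk⟩ := heven
  obtain ⟨l, hl⟩ := even_card_support_of_eval_one_eq_zero hg
  omega

end CyclicCodes

section TraceExpansion

lemma sub_one_pow_char_pow_sub_one {R : Type*} [CommRing R] (p : ℕ) [Fact p.Prime] [CharP R p]
    (x : R) (n : ℕ) : (x - 1) ^ (p ^ n - 1) = ∑ i ∈ Finset.range (p ^ n), x ^ i := by
  have hpoly : (X - 1 : R[X]) ^ (p ^ n - 1) = ∑ i ∈ Finset.range (p ^ n), X ^ i := by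
    refine (monic_X_sub_C (1 : R)).isRegular.right ?_
    simp only [C_1]
    rw [geom_sum_mul, pow_sub_one_mul (pow_pos (Nat.Prime.pos Fact.out) n).ne', sub_pow_char_pow,
      one_pow]
  simpa [eval_finsetSum] using congrArg (eval x) hpoly

lemma add_one_pow_two_pow_sub_two_pow_add_one {R : Type*} [CommRing R] [CharP R 2] (x : R)
    (h : ℕ) : (x + 1) ^ (2 ^ (2 * h) - 2 ^ h + 1) =
      ∑ i ∈ Finset.range (2 ^ h), x ^ (i * 2 ^ h) +
        ∑ i ∈ Finset.range (2 ^ h), x ^ (i * 2 ^ h + 1) := by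
  have hexp : 2 ^ (2 * h) - 2 ^ h + 1 = (2 ^ h - 1) * 2 ^ h + 1 := by
    rw [Nat.sub_mul, one_mul, ← pow_add, two_mul]
  have hpow : (x + 1) ^ ((2 ^ h - 1) * 2 ^ h) = ∑ i ∈ Finset.range (2 ^ h), x ^ (i * 2 ^ h) := by
    rw [pow_mul, ← CharTwo.sub_eq_add, sub_one_pow_char_pow_sub_one 2, sum_pow_char_pow]
    simp only [pow_mul]
  rw [hexp, pow_succ, hpow, mul_add, mul_one, add_comm, Finset.sum_mul]
  simp only [pow_succ]

lemma trace_pow_card_pow {K L : Type*} [Field K] [Finite K] [Field L] [Algebra K L]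
    [Algebra.IsAlgebraic K L] (x : L) (n : ℕ) :
    Algebra.trace K L (x ^ Nat.card K ^ n) = Algebra.trace K L x := by
  induction n with
  | zero => rw [pow_zero, pow_one]
  | succ n ih =>
    have := Fintype.ofFinite K
    rw [pow_succ, pow_mul, ← ih, Nat.card_eq_fintype_card]
    exact Algebra.trace_eq_of_algEquiv (FiniteField.frobeniusAlgEquivOfAlgebraic K L) _

variable {K : Type*} [Field K] [Finite K] [Algebra (ZMod 2) K]

lemma pow_two_pow_finrank (x : K) : x ^ 2 ^ Module.finrank (ZMod 2) K = x := by
  have := Fintype.ofFinite K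
  rw [FiniteField.pow_finrank_eq_card, FiniteField.pow_card]

lemma trace_pow_mul_two_pow (x : K) (i n : ℕ) :
    Algebra.trace (ZMod 2) K (x ^ (i * 2 ^ n)) = Algebra.trace (ZMod 2) K (x ^ i) := by
  simpa only [pow_mul, Nat.card_zmod] using trace_pow_card_pow (K := ZMod 2) (x ^ i) n

variable {h : ℕ} (hK : Module.finrank (ZMod 2) K = 2 * h + 1)
include hK

lemma trace_pow_mul_two_pow_add_one (x : K) (i : ℕ) :
    Algebra.trace (ZMod 2) K (x ^ (i * 2 ^ h + 1)) =
      Algebra.trace (ZMod 2) K (x ^ (2 ^ (h + 1) + i)) := by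
  have hexp : (i * 2 ^ h + 1) * 2 ^ (h + 1) = 2 ^ (h + 1) + i * 2 ^ (2 * h + 1) := by ring
  rw [← trace_pow_mul_two_pow x _ (h + 1), hexp, ← hK, pow_add, pow_mul, pow_two_pow_finrank,
    ← pow_add]

lemma trace_kasami_eq_one_add_sum (hh : 2 ≤ h) (x : K) :
    Algebra.trace (ZMod 2) K ((x + 1) ^ (2 ^ (2 * h) - 2 ^ h + 1)) =
      1 + ∑ j ∈ traceExponents h, Algebra.trace (ZMod 2) K (x ^ j) := by
  have := charP_of_injective_algebraMap' (ZMod 2) (A := K) 2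
  have hT (i : ℕ) : Algebra.trace (ZMod 2) K (x ^ (2 * i)) = Algebra.trace (ZMod 2) K (x ^ i) := by
    simpa only [pow_one, mul_comm i] using trace_pow_mul_two_pow x i 1
  have hcoset : Algebra.trace (ZMod 2) K (x ^ (2 ^ (h + 1) + 1)) =
      Algebra.trace (ZMod 2) K (x ^ (2 ^ h + 1)) := by
    rw [← trace_pow_mul_two_pow_add_one hK, one_mul]
  have hone : Algebra.trace (ZMod 2) K 1 = 1 := by
    rw [← map_one (algebraMap (ZMod 2) K), Algebra.trace_algebraMap, hK, nsmul_one]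
    exact ZMod.natCast_eq_one_iff_odd.2 ⟨h, rfl⟩
  have hsum := sum_range_add_sum_Ico_eq_sum_traceExponents
    (T := fun i => Algebra.trace (ZMod 2) K (x ^ i)) hT hh hcoset
  rw [Finset.sum_Ico_eq_sum_range, pow_zero, hone,
    show 3 * 2 ^ h - 2 ^ (h + 1) = 2 ^ h by omega] at hsum
  rw [add_one_pow_two_pow_sub_two_pow_add_one, map_add, map_sum, map_sum, ← hsum]
  simp only [trace_pow_mul_two_pow, trace_pow_mul_two_pow_add_one hK]

end TraceExpansion

section PowerSumSequences

variable {F K : Type*} [Field F] [Field K] [Algebra F K] {n : ℕ}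

lemma natDegree_eq_card_of_dvd_X_pow_sub_one (hn : (n : F) ≠ 0) {ζ : K}
    (hζ : IsPrimitiveRoot ζ n) {g : F[X]} (hg : g ∣ X ^ n - 1) {D : Finset K}
    (hD : ∀ x, x ∈ D ↔ aeval x g = 0) : g.natDegree = D.card := by
  have hsep : (X ^ n - 1 : F[X]).Separable := X_pow_sub_one_separable_iff.2 hn
  have hsplits : ((X ^ n - 1 : F[X]).map (algebraMap F K)).Splits := by
    simpa only [Polynomial.map_sub, Polynomial.map_pow, map_X, Polynomial.map_one, C_1] using
      X_pow_sub_one_splits hζ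
  have hroots : g.rootSet K = (D : Set K) := by
    ext x
    rw [mem_rootSet_of_ne (ne_zero_of_dvd_ne_zero hsep.ne_zero hg), Finset.mem_coe, hD]
  rw [← card_rootSet_eq_natDegree (hsep.of_dvd hg) (hsplits.of_dvd
    (Polynomial.map_ne_zero hsep.ne_zero) (Polynomial.map_dvd _ hg)), ← Nat.card_eq_fintype_card,
    hroots, Nat.card_coe_set_eq, Set.ncard_coe_finset]

variable {s : ℕ → F} {Z : Finset K} (hZ : ∀ z ∈ Z, z ^ n = 1)
  (hs : ∀ t, algebraMap F K (s t) = ∑ z ∈ Z, z ^ t)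
include hZ hs

lemma aeval_sum_C_mul_X_pow_eq_ite [DecidableEq K] {x : K} (hx : x ^ n = 1) :
    aeval x (∑ t ∈ Finset.range n, C (s t) * X ^ t) = if x⁻¹ ∈ Z then (n : K) else 0 := by
  rcases eq_or_ne x 0 with rfl | hx0
  · obtain rfl : n = 0 := by_contra fun hn => zero_ne_one ((zero_pow hn).symm.trans hx)
    simp
  calc aeval x (∑ t ∈ Finset.range n, C (s t) * X ^ t)
      = ∑ t ∈ Finset.range n, ∑ z ∈ Z, (z * x) ^ t := by
        simp only [map_sum, map_mul, aeval_C, hs, map_pow, aeval_X, Finset.sum_mul, mul_pow]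
    _ = ∑ z ∈ Z, if z = x⁻¹ then (n : K) else 0 := by
        rw [Finset.sum_comm]
        refine Finset.sum_congr rfl fun z hz => ?_
        rw [geom_sum_eq_ite_of_pow_eq_one (by rw [mul_pow, hZ z hz, hx, one_mul]),
          if_congr (mul_eq_one_iff_eq_inv₀ hx0) rfl rfl]
    _ = if x⁻¹ ∈ Z then (n : K) else 0 := Finset.sum_ite_eq' ..

lemma aeval_div_gcd_X_pow_sub_one_eq_zero_iff [DecidableEq F[X]] (hn : (n : F) ≠ 0) {x : K} :
    aeval x ((X ^ n - 1) / EuclideanDomain.gcd (X ^ n - 1)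
      (∑ t ∈ Finset.range n, C (s t) * X ^ t)) = 0 ↔ x⁻¹ ∈ Z := by
  classical
  have hnK : (n : K) ≠ 0 := by
    rwa [← map_natCast (algebraMap F K), Ne, map_eq_zero]
  rw [aeval_div_gcd_eq_zero_iff (X_pow_sub_one_separable_iff.2 hn), map_sub, map_pow, aeval_X,
    map_one, sub_eq_zero]
  constructor
  · rintro ⟨hx, hS⟩
    by_contra hmem
    exact hS (by rw [aeval_sum_C_mul_X_pow_eq_ite hZ hs hx, if_neg hmem])
  · intro hmem
    have hx : x ^ n = 1 := by rw [← inv_inj, ← inv_pow, hZ _ hmem, inv_one]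
    rw [aeval_sum_C_mul_X_pow_eq_ite hZ hs hx, if_pos hmem]
    exact ⟨hx, hnK⟩

end PowerSumSequences

section TraceSequences

lemma exists_isLeast_wtSet {Cs : Submodule (ZMod 2) (ZMod 2)[X]} {a b : ℕ}
    (ha : ∀ c ∈ Cs, c ≠ 0 → a ≤ c.support.card) (hb : ∃ c ∈ Cs, c ≠ 0 ∧ c.support.card ≤ b) :
    ∃ d, IsLeast (wtSet Cs) d ∧ a ≤ d ∧ d ≤ b := by
  obtain ⟨c, hc, hc0, hcb⟩ := hb
  have hmem : c.support.card ∈ wtSet Cs := ⟨c, hc, hc0, rfl⟩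
  refine ⟨sInf (wtSet Cs), isLeast_csInf ⟨_, hmem⟩, ?_, (Nat.sInf_le hmem).trans hcb⟩
  obtain ⟨c', hc', hc0', hw⟩ := Nat.sInf_mem ⟨_, hmem⟩
  exact hw ▸ ha c' hc' hc0'

lemma natCast_two_pow_sub_one_ne_zero {m : ℕ} (hm : m ≠ 0) : ((2 ^ m - 1 : ℕ) : ZMod 2) ≠ 0 := by
  rw [Ne, ZMod.natCast_eq_zero_iff_even, Nat.not_even_iff_odd, ← Nat.coprime_two_right]
  exact coprime_two_pow_sub_one_two hm

variable {m : ℕ} {α : GaloisField 2 m} {f : GaloisField 2 m → GaloisField 2 m}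

lemma mem_codeC {c : (ZMod 2)[X]} :
    c ∈ codeC m α f ↔ c.degree < (2 ^ m - 1 : ℕ) ∧ genPoly m α f ∣ c := by
  rw [codeC, Submodule.mem_inf, mem_degreeLT, Submodule.restrictScalars_mem,
    Ideal.mem_span_singleton]

variable (α f)

lemma genPoly_dvd : genPoly m α f ∣ X ^ (2 ^ m - 1) - 1 := div_gcd_dvd _ _

lemma genPoly_ne_zero (hm : m ≠ 0) : genPoly m α f ≠ 0 :=
  ne_zero_of_dvd_ne_zero
    (X_pow_sub_one_separable_iff.2 (natCast_two_pow_sub_one_ne_zero hm)).ne_zero (genPoly_dvd α f)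

lemma finrank_codeC (hm : m ≠ 0) :
    Module.finrank (ZMod 2) (codeC m α f) = 2 ^ m - 1 - (genPoly m α f).natDegree :=
  finrank_degreeLT_inf_span_singleton (genPoly_ne_zero α f hm) _

variable {α f} {Z : Finset (GaloisField 2 m)} (hm : m ≠ 0) (hZ : ∀ z ∈ Z, z ^ (2 ^ m - 1) = 1)
  (hs : ∀ t, algebraMap (ZMod 2) (GaloisField 2 m)
    (Algebra.trace (ZMod 2) (GaloisField 2 m) (f (α ^ t + 1))) = ∑ z ∈ Z, z ^ t)
include hm hZ hs

lemma aeval_genPoly_eq_zero_iff {x : GaloisField 2 m} :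
    aeval x (genPoly m α f) = 0 ↔ x⁻¹ ∈ Z :=
  aeval_div_gcd_X_pow_sub_one_eq_zero_iff hZ hs (natCast_two_pow_sub_one_ne_zero hm)

open scoped Pointwise in
lemma natDegree_genPoly {ζ : GaloisField 2 m} (hζ : IsPrimitiveRoot ζ (2 ^ m - 1)) :
    (genPoly m α f).natDegree = Z.card := by
  rw [← Finset.card_inv Z]
  refine natDegree_eq_card_of_dvd_X_pow_sub_one (natCast_two_pow_sub_one_ne_zero hm) hζ
    (genPoly_dvd α f) fun x => ?_
  rw [Finset.mem_inv', aeval_genPoly_eq_zero_iff hm hZ hs]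

lemma lt_card_support_of_mem_codeC {w : ℕ} {β δ : GaloisField 2 m} (hβ : β ≠ 0)
    (hδ : IsPrimitiveRoot δ (2 ^ m - 1)) (hrun : ∀ i < w, β * δ ^ i ∈ Z) {c : (ZMod 2)[X]}
    (hc : c ∈ codeC m α f) (hc0 : c ≠ 0) : w < c.support.card := by
  obtain ⟨hdeg, hdvd⟩ := mem_codeC.1 hc
  refine lt_card_support_of_aeval_eq_zero hc0 (inv_ne_zero hβ) hδ.inv hdeg fun i hi => ?_
  refine aeval_eq_zero_of_dvd_aeval_eq_zero hdvd ((aeval_genPoly_eq_zero_iff hm hZ hs).2 ?_)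
  simpa only [mul_inv, inv_pow, inv_inv] using hrun i hi

lemma card_support_genPoly_le_natDegree (hone : 1 ∈ Z) (heven : Even (genPoly m α f).natDegree) :
    (genPoly m α f).support.card ≤ (genPoly m α f).natDegree := by
  refine card_support_le_natDegree_of_eval_one_eq_zero ?_ heven
  have hroot := (aeval_genPoly_eq_zero_iff hm hZ hs (x := 1)).2 (by rwa [inv_one])
  rwa [← map_one (algebraMap (ZMod 2) (GaloisField 2 m)), aeval_algebraMap_apply, map_eq_zero,
    coe_aeval_eq_eval] at hroot

end TraceSequences

section KasamiCode

/-- The frequencies `z` in the expansion of `Tr ((α ^ t + 1) ^ (2 ^ (2 * h) - 2 ^ h + 1))` as a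
power sum `∑ z, z ^ t`: besides 1, the conjugates `α ^ (2 ^ r * j)` of the powers `α ^ j` with
`j` in `traceExponents h`. -/
noncomputable def kasamiSpectrum {K : Type*} [Monoid K] (h : ℕ) (α : K) : Finset K :=
  insert 1 ((traceExponents h ×ˢ Finset.range (2 * h + 1)).image fun p => α ^ (2 ^ p.2 * p.1))

section Spectrum

variable {K : Type*} [CommMonoid K] {h : ℕ} {α : K} (hα : IsPrimitiveRoot α (2 ^ (2 * h + 1) - 1))

lemma pow_mem_kasamiSpectrum {h j : ℕ} (hj : j ∈ traceExponents h) (α : K) :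
    α ^ j ∈ kasamiSpectrum h α :=
  Finset.mem_insert_of_mem <| Finset.mem_image.2
    ⟨(j, 0), Finset.mem_product.2 ⟨hj, by simp⟩, by simp⟩

include hα

lemma pow_eq_one_of_mem_kasamiSpectrum {z : K} (hz : z ∈ kasamiSpectrum h α) :
    z ^ (2 ^ (2 * h + 1) - 1) = 1 := by
  rcases Finset.mem_insert.1 hz with rfl | hz
  · exact one_pow _
  · obtain ⟨p, -, rfl⟩ := Finset.mem_image.1 hz
    rw [pow_right_comm, hα.pow_eq_one, one_pow]

lemma injOn_kasamiSpectrum (hh : 1 ≤ h) : Set.InjOn (fun p : ℕ × ℕ => α ^ (2 ^ p.2 * p.1))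
    (traceExponents h ×ˢ Finset.range (2 * h + 1) : Finset (ℕ × ℕ)) := by
  rintro ⟨j, r⟩ hp ⟨j', r'⟩ hp' heq
  obtain ⟨hj, hr⟩ := Finset.mem_product.1 hp
  obtain ⟨hj', hr'⟩ := Finset.mem_product.1 hp'
  have hmod : 2 ^ r * j ≡ 2 ^ r' * j' [MOD 2 ^ (2 * h + 1) - 1] := by
    rw [hα.eq_orderOf]
    exact (hα.isOfFinOrder (by have := three_mul_two_pow_lt hh; omega)).pow_eq_pow_iff_modEq.1 heq
  obtain ⟨rfl, rfl⟩ := eq_and_eq_of_two_pow_mul_modEq hh (Finset.mem_range.1 hr)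
    (Finset.mem_range.1 hr') (traceExponents_subset_cosetReps h hj)
    (traceExponents_subset_cosetReps h hj') hmod
  rfl

lemma one_notMem_image_traceExponents (hh : 1 ≤ h) :
    1 ∉ (traceExponents h ×ˢ Finset.range (2 * h + 1)).image fun p => α ^ (2 ^ p.2 * p.1) := by
  intro hmem
  obtain ⟨⟨j, r⟩, hp, hone⟩ := Finset.mem_image.1 hmem
  obtain ⟨-, hlt, hodd⟩ :=
    mem_cosetReps.1 (traceExponents_subset_cosetReps h (Finset.mem_product.1 hp).1)
  have hdvd : 2 ^ (2 * h + 1) - 1 ∣ j :=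
    ((coprime_two_pow_sub_one_two (by omega)).pow_right r).dvd_of_dvd_mul_left
      (hα.dvd_of_pow_eq_one _ hone)
  exact ((three_mul_two_pow_lt hh).trans_le (Nat.le_of_dvd hodd.pos hdvd)).not_gt hlt

lemma card_kasamiSpectrum (hh : 1 ≤ h) :
    (kasamiSpectrum h α).card = 1 + (2 * h + 1) * (traceExponents h).card := by
  rw [kasamiSpectrum, Finset.card_insert_of_notMem (one_notMem_image_traceExponents hα hh),
    Finset.card_image_of_injOn (injOn_kasamiSpectrum hα hh), Finset.card_product,
    Finset.card_range]
  ring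

end Spectrum

lemma algebraMap_trace_kasami_eq_sum_kasamiSpectrum {K : Type*} [Field K] [Finite K]
    [Algebra (ZMod 2) K] {h : ℕ} (hK : Module.finrank (ZMod 2) K = 2 * h + 1) (hh : 2 ≤ h) {α : K}
    (hα : IsPrimitiveRoot α (2 ^ (2 * h + 1) - 1)) (t : ℕ) :
    algebraMap (ZMod 2) K
      (Algebra.trace (ZMod 2) K ((α ^ t + 1) ^ (2 ^ (2 * h) - 2 ^ h + 1))) =
      ∑ z ∈ kasamiSpectrum h α, z ^ t := by
  rw [trace_kasami_eq_one_add_sum hK hh, map_add, map_one, map_sum, kasamiSpectrum,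
    Finset.sum_insert (one_notMem_image_traceExponents hα (by omega)), one_pow,
    Finset.sum_image (injOn_kasamiSpectrum hα (by omega)), Finset.sum_product]
  congr 1
  refine Finset.sum_congr rfl fun j _ => ?_
  rw [FiniteField.algebraMap_trace_eq_sum_pow, hK, Nat.card_zmod]
  refine Finset.sum_congr rfl fun r _ => ?_
  rw [← pow_mul, ← pow_mul, ← pow_mul]
  congr 1
  ring

section Code

variable {h : ℕ} {α : GaloisField 2 (2 * h + 1)}
  {f : GaloisField 2 (2 * h + 1) → GaloisField 2 (2 * h + 1)} (hh : 2 ≤ h)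
  (hα : IsPrimitiveRoot α (2 ^ (2 * h + 1) - 1)) (hf : ∀ x, f x = x ^ (2 ^ (2 * h) - 2 ^ h + 1))
include hh hα hf

lemma algebraMap_trace_apply_eq_sum_kasamiSpectrum (t : ℕ) :
    algebraMap (ZMod 2) (GaloisField 2 (2 * h + 1))
      (Algebra.trace (ZMod 2) (GaloisField 2 (2 * h + 1)) (f (α ^ t + 1))) =
      ∑ z ∈ kasamiSpectrum h α, z ^ t := by
  rw [hf]
  exact algebraMap_trace_kasami_eq_sum_kasamiSpectrum (GaloisField.finrank 2 (by omega)) hh hα t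

lemma natDegree_genPoly_kasami :
    (genPoly (2 * h + 1) α f).natDegree = 1 + (2 * h + 1) * (traceExponents h).card := by
  rw [natDegree_genPoly (by omega) (fun _ => pow_eq_one_of_mem_kasamiSpectrum hα)
    (algebraMap_trace_apply_eq_sum_kasamiSpectrum hh hα hf) hα, card_kasamiSpectrum hα (by omega)]

lemma two_pow_le_card_support_of_mem_codeC_kasami {c : (ZMod 2)[X]}
    (hc : c ∈ codeC (2 * h + 1) α f) (hc0 : c ≠ 0) : 2 ^ (h - 1) ≤ c.support.card := by
  have hα0 : α ≠ 0 := hα.ne_zero (by have := three_mul_two_pow_lt (h := h) (by omega); omega)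
  have hsq : IsPrimitiveRoot (α ^ 2) (2 ^ (2 * h + 1) - 1) :=
    hα.pow_of_coprime 2 (coprime_two_pow_sub_one_two (by omega)).symm
  refine Nat.le_of_pred_lt <| lt_card_support_of_mem_codeC (by omega)
    (fun _ => pow_eq_one_of_mem_kasamiSpectrum hα)
    (algebraMap_trace_apply_eq_sum_kasamiSpectrum hh hα hf)
    (pow_ne_zero (2 ^ (h + 1) + 3) hα0) hsq (fun i hi => ?_) hc hc0
  rw [← pow_mul, ← pow_add]
  exact pow_mem_kasamiSpectrum (two_pow_add_mem_traceExponents (by omega) hi) α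

lemma exists_mem_codeC_kasami_card_support_le : ∃ c ∈ codeC (2 * h + 1) α f,
    c ≠ 0 ∧ c.support.card ≤ (genPoly (2 * h + 1) α f).natDegree := by
  have hdegree := natDegree_genPoly_kasami hh hα hf
  have hne := genPoly_ne_zero α f (by omega)
  have heven : Even (genPoly (2 * h + 1) α f).natDegree := by
    rw [hdegree]
    exact odd_one.add_odd (Odd.mul ⟨h, rfl⟩ (odd_card_traceExponents hh))
  refine ⟨genPoly _ α f, mem_codeC.2 ⟨?_, dvd_rfl⟩, hne, ?_⟩
  · rw [← natDegree_lt_iff_degree_lt hne, hdegree]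
    exact one_add_mul_card_traceExponents_lt hh
  · exact card_support_genPoly_le_natDegree (by omega)
      (fun _ => pow_eq_one_of_mem_kasamiSpectrum hα)
      (algebraMap_trace_apply_eq_sum_kasamiSpectrum hh hα hf) (Finset.mem_insert_self _ _) heven

end Code

end KasamiCode

theorem stmt14_general (m : ℕ) (hm5 : 5 ≤ m) (hmo : Odd m)
    (α : GaloisField 2 m) (hα : orderOf α = 2 ^ m - 1)
    (f : GaloisField 2 m → GaloisField 2 m)
    (hf : ∀ x, f x = x ^ (2 ^ (m - 1) - 2 ^ ((m - 1) / 2) + 1)) :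
    Module.finrank (ZMod 2) ↥(codeC m α f) =
      2 ^ m - 1 - (genPoly m α f).natDegree ∧
    (m % 4 = 1 →
      (genPoly m α f).natDegree = 1 + m * (2 ^ ((m - 1) / 2) - 1)) ∧
    (m % 4 = 3 →
      (genPoly m α f).natDegree = 1 + m * (2 ^ ((m - 1) / 2) - 3)) ∧
    (∃ d : ℕ, IsLeast (wtSet (codeC m α f)) d ∧
      2 ^ ((m - 3) / 2) ≤ d ∧ d ≤ (genPoly m α f).natDegree) := by
  obtain ⟨h, rfl⟩ := hmo
  have hh : 2 ≤ h := by omega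
  have hprim : IsPrimitiveRoot α (2 ^ (2 * h + 1) - 1) := hα ▸ IsPrimitiveRoot.orderOf α
  rw [Nat.add_sub_cancel, Nat.mul_div_cancel_left h two_pos] at hf ⊢
  rw [show (2 * h + 1 - 3) / 2 = h - 1 by omega]
  refine ⟨finrank_codeC α f (by omega), fun hmod => ?_, fun hmod => ?_, exists_isLeast_wtSet
    (fun c => two_pow_le_card_support_of_mem_codeC_kasami hh hprim hf)
    (exists_mem_codeC_kasami_card_support_le hh hprim hf)⟩
  · rw [natDegree_genPoly_kasami hh hprim hf,
      card_traceExponents_of_even hh (Nat.even_iff.2 (by omega))]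
  · rw [natDegree_genPoly_kasami hh hprim hf,
      card_traceExponents_of_odd hh (Nat.odd_iff.2 (by omega))]

/-- Theorem 5: for f₅(x) = x^{2^{m−1} − 2^{(m−1)/2} + 1} over 𝔽_{2^m}, m ≥ 7 odd,
the code C_s has length 2^m − 1 and dimension 2^m − 1 − L_s, where
L_s = 1 + m(2^{(m−1)/2} − 1) if m ≡ 1 (mod 4) and
L_s = 1 + m(2^{(m−1)/2} − 3) if m ≡ 3 (mod 4), and the minimum distance
satisfies 2^{(m−3)/2} ≤ d(C_s) ≤ L_s. -/
theorem stmt14 (m : ℕ) (hm7 : 7 ≤ m) (hmo : Odd m)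
    (α : GaloisField 2 m) (hα : orderOf α = 2 ^ m - 1)
    (f : GaloisField 2 m → GaloisField 2 m)
    (hf : ∀ x, f x = x ^ (2 ^ (m - 1) - 2 ^ ((m - 1) / 2) + 1)) :
    Module.finrank (ZMod 2) ↥(codeC m α f) =
      2 ^ m - 1 - (genPoly m α f).natDegree ∧
    (m % 4 = 1 →
      (genPoly m α f).natDegree = 1 + m * (2 ^ ((m - 1) / 2) - 1)) ∧
    (m % 4 = 3 →
      (genPoly m α f).natDegree = 1 + m * (2 ^ ((m - 1) / 2) - 3)) ∧
    (∃ d : ℕ, IsLeast (wtSet (codeC m α f)) d ∧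
      2 ^ ((m - 3) / 2) ≤ d ∧ d ≤ (genPoly m α f).natDegree) := by
  exact stmt14_general m (by omega) hmo α hα f hf
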